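/- arXiv:1808.05550 — 2 statements merged into one kernel-verified Lean document; each statement's English description precedes it below -/
import Mathlib

section
/- Let n ≥ 1 and 0 ≤ l ≤ k ≤ n. For any n×n Hermitian positive semi-definite matrices A, B, A^(k+1), …, A^(n), one has D(A,…,A [l copies], B,…,B [k−l copies], A^(k+1),…,A^(n))^k ≥ D(A,…,A [k copies], A^(k+1),…,A^(n))^l · D(B,…,B [k copies], A^(k+1),…,A^(n))^(k−l). -/
open Matrix MeasureTheory Finset ProbabilityTheory
open scoped Classical ComplexOrder

noncomputable section

/-- The mixed discriminant of `n` matrices `A 0, …, A (n-1)`: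
`D(A₁,…,Aₙ) = (1/n!) Σ_{σ ∈ Sₙ} det M^σ`, where the `j`-th column of `M^σ`
is the `j`-th column of `A (σ j)`. -/
def mixedDisc {n : ℕ} (A : Fin n → Matrix (Fin n) (Fin n) ℂ) : ℂ :=
  (n.factorial : ℂ)⁻¹ * ∑ σ : Equiv.Perm (Fin n), (Matrix.of fun i j => A (σ j) i j).det

/-- The real value of the mixed discriminant (real for Hermitian arguments). -/
def mixedDiscR {n : ℕ} (A : Fin n → Matrix (Fin n) (Fin n) ℂ) : ℝ := (mixedDisc A).re

end

/-!
A matrix with positive definite imaginary part has nonzero determinant. More generally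
`D(E₁, …, Eⱼ, M, …, M) ≠ 0` whenever the `Eᵢ` and `Im M` are positive definite: by induction, all
roots of the polynomial `z ↦ D(E₁, …, Eⱼ, M + z E, …, M + z E)` lie in the open lower half-plane,
so by Gauss–Lucas its derivative at `0`, a multiple of `D(E₁, …, Eⱼ, E, M, …, M)`, is nonzero.
When only two places are left, taking `M = B + z A` with `B` Hermitian and `z` in the upper
half-plane gives a real quadratic in `z` without nonreal roots. Its discriminant is nonnegative,
which is Alexandrov's inequality `D(A, A, …) D(B, B, …) ≤ D(A, B, …)²`. Hence replacing copies of
`B` by `A` one at a time produces a log-concave sequence, positive when all matrices are positive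
definite, and a density argument reaches the positive semidefinite ones.
-/

section LogConcave

theorem pow_mul_pow_le_pow_of_logConcave {a : ℕ → ℝ} {l k : ℕ} (hlk : l ≤ k)
    (hpos : ∀ i ≤ k, 0 < a i) (hlc : ∀ i, i + 2 ≤ k → a i * a (i + 2) ≤ a (i + 1) ^ 2) :
    a k ^ l * a 0 ^ (k - l) ≤ a l ^ k := by
  obtain ⟨d, rfl⟩ := Nat.exists_eq_add_of_le hlk
  rw [Nat.add_sub_cancel_left]
  rcases d.eq_zero_or_pos with rfl | hd
  · simp
  have ratio_anti {i j : ℕ} (hij : i ≤ j) (hj : j + 1 ≤ l + d) :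
      a (j + 1) / a j ≤ a (i + 1) / a i := by
    induction j, hij using Nat.le_induction with
    | base => rfl
    | succ j _ ih =>
      refine le_trans ?_ (ih (by lia))
      rw [div_le_div_iff₀ (hpos _ (by lia)) (hpos _ (by lia))]
      linarith [hlc j hj]
  have hl : 0 < a l := hpos l (by lia)
  have h0 : 0 < a 0 := hpos 0 (by lia)
  set r := a (l + 1) / a l
  have r_pos : 0 < r := div_pos (hpos _ (by lia)) hl
  have upper : a (l + d) ≤ r ^ d * a l :=
    le_geom (u := fun i => a (l + i)) r_pos.le d fun i hi =>
      (div_le_iff₀ (hpos _ (by lia))).1 (ratio_anti (Nat.le_add_right l i) (by lia))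
  have lower : r ^ l * a 0 ≤ a l :=
    geom_le r_pos.le l fun i hi =>
      (le_div_iff₀ (hpos _ (by lia))).1 (ratio_anti hi.le (by lia))
  calc a (l + d) ^ l * a 0 ^ d
      ≤ (r ^ d * a l) ^ l * a 0 ^ d := by
        gcongr
        exact (hpos _ le_rfl).le
    _ = a l ^ l * (r ^ l * a 0) ^ d := by ring
    _ ≤ a l ^ l * a l ^ d := by gcongr
    _ = a l ^ (l + d) := (pow_add _ _ _).symm

end LogConcave

section UpperHalfPlane

open Polynomial

theorem coeff_one_ne_zero_of_eval_ne_zero {P : ℂ[X]} (hP : P.natDegree ≠ 0)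
    (hroots : ∀ z : ℂ, 0 ≤ z.im → P.eval z ≠ 0) : P.coeff 1 ≠ 0 := by
  have hsub : convexHull ℝ (P.rootSet ℂ) ⊆ {z | z.im < 0} := by
    refine convexHull_min (fun z hz => ?_) (convex_halfSpace_im_lt 0)
    by_contra hz'
    exact hroots z (not_lt.1 hz') (by simpa using aeval_eq_zero_of_mem_rootSet hz)
  intro h1
  have hzero : (0 : ℂ) ∈ P.derivative.rootSet ℂ := by
    rw [mem_rootSet, coe_aeval_eq_eval, ← coeff_zero_eq_eval_zero, coeff_derivative]
    exact ⟨derivative_ne_zero.2 hP, by simp [h1]⟩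
  have him : (0 : ℂ).im < 0 := hsub <|
    rootSet_derivative_subset_convexHull_rootSet
      (natDegree_pos_iff_degree_pos.1 (Nat.pos_of_ne_zero hP)) hzero
  exact lt_irrefl _ him

theorem discrim_nonneg_of_forall_im_pos_ne_zero {a b c : ℝ}
    (h : ∀ z : ℂ, 0 < z.im → (a : ℂ) * (z * z) + b * z + c ≠ 0) : 0 ≤ discrim a b c := by
  by_contra! hneg
  have ha : a ≠ 0 := by
    rintro rfl
    exact hneg.not_ge (by simpa [discrim] using sq_nonneg b)
  set s := √(-discrim a b c) / (2 * |a|)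
  have hs : 0 < s := by
    have := abs_pos.2 ha
    have := Real.sqrt_pos.2 (neg_pos.2 hneg)
    positivity
  have hs_sq : (2 * a * s) ^ 2 = -discrim a b c := by
    rw [mul_pow, div_pow, Real.sq_sqrt (neg_nonneg.2 hneg.le), mul_pow 2 |a|, sq_abs]
    field_simp
  set z : ℂ := ((-b / (2 * a) : ℝ) : ℂ) + s * Complex.I
  have hz : 2 * a * z + b = (2 * a * s : ℝ) * Complex.I := by
    have : (a : ℂ) ≠ 0 := by exact_mod_cast ha
    simp only [z]
    push_cast
    field_simp
    ring
  have hdiscrim : discrim (a : ℂ) b c = (2 * a * z + b) ^ 2 := by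
    rw [hz, mul_pow, Complex.I_sq, ← Complex.ofReal_pow, hs_sq]
    simp [discrim]
  have z_im : 0 < z.im := by simpa [z, -Complex.ofReal_div] using hs
  exact h z z_im
    ((quadratic_eq_zero_iff_discrim_eq_sq (by exact_mod_cast ha) z).2 hdiscrim)

end UpperHalfPlane

section LinePolynomial

open Polynomial

variable {ι R : Type*} [DecidableEq ι] [CommRing R] {M : ι → Type*}
  [∀ i, AddCommGroup (M i)] [∀ i, Module R (M i)]

/-- The restriction of a multilinear form to the line through `x` whose direction is `y` on `S` and
zero elsewhere, as a polynomial in the parameter of the line; it is given by its expansion over the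
subsets of `S`. -/
noncomputable def linePolynomial (f : MultilinearMap R M R) (S : Finset ι) (x y : ∀ i, M i) :
    R[X] :=
  ∑ s ∈ S.powerset, monomial s.card (f (s.piecewise y x))

theorem map_piecewise_smul_left (f : MultilinearMap R M R) (s : Finset ι) (c : R)
    (x y : ∀ i, M i) : f (s.piecewise (c • y) x) = c ^ s.card * f (s.piecewise y x) := by
  have h := f.map_piecewise_smul (fun _ => c) (s.piecewise y x) s
  rw [Finset.prod_const, smul_eq_mul] at h
  rw [← h]
  congr 1
  ext i
  by_cases hi : i ∈ s <;> simp [hi]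

theorem eval_linePolynomial (f : MultilinearMap R M R) (S : Finset ι) (x y : ∀ i, M i) (t : R) :
    (linePolynomial f S x y).eval t = f (S.piecewise (x + t • y) x) := by
  rw [add_comm, f.map_piecewise_add, linePolynomial, eval_finsetSum]
  simp only [eval_monomial, map_piecewise_smul_left, mul_comm]

theorem coeff_linePolynomial (f : MultilinearMap R M R) (S : Finset ι) (x y : ∀ i, M i) (m : ℕ) :
    (linePolynomial f S x y).coeff m = ∑ s ∈ S.powersetCard m, f (s.piecewise y x) := by
  simp only [linePolynomial, finsetSum_coeff, coeff_monomial, ← Finset.sum_filter,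
    Finset.powersetCard_eq_filter]

theorem coeff_card_linePolynomial (f : MultilinearMap R M R) (S : Finset ι) (x y : ∀ i, M i) :
    (linePolynomial f S x y).coeff S.card = f (S.piecewise y x) := by
  simp [coeff_linePolynomial]

theorem coeff_one_linePolynomial (f : MultilinearMap R M R) (S : Finset ι) (x y : ∀ i, M i) :
    (linePolynomial f S x y).coeff 1 = ∑ i ∈ S, f (Function.update x i (y i)) := by
  simp [coeff_linePolynomial, Finset.powersetCard_one, Finset.piecewise_singleton]

theorem eval_linePolynomial_pair (f : MultilinearMap R M R) {p q : ι} (hpq : p ≠ q)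
    (x y : ∀ i, M i) (t : R) :
    (linePolynomial f {p, q} x y).eval t = f (Function.update (Function.update x p (y p)) q (y q))
      * (t * t) + (f (Function.update x p (y p)) + f (Function.update x q (y q))) * t + f x := by
  have hp : p ∉ ({q} : Finset ι) := by simpa using hpq
  have powerset_q : ({q} : Finset ι).powerset = {∅, {q}} := by
    ext s
    simp [Finset.subset_singleton_iff]
  rw [linePolynomial, eval_finsetSum, Finset.sum_powerset_insert hp, powerset_q,
    Finset.sum_pair (Finset.singleton_ne_empty q).symm,
    Finset.sum_pair (Finset.singleton_ne_empty q).symm, Function.update_comm hpq]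
  simp only [eval_monomial, Finset.card_empty, Finset.card_singleton, insert_empty_eq,
    Finset.card_pair hpq, Finset.piecewise_insert, Finset.piecewise_empty,
    Finset.piecewise_singleton]
  ring

end LinePolynomial

section ImaginaryPart

open ComplexStarModule

theorem imaginaryPart_add_smul_of_isSelfAdjoint {V : Type*} [AddCommGroup V] [Module ℂ V]
    [StarAddMonoid V] [StarModule ℂ V] {c : V} (hc : IsSelfAdjoint c) (a : V) (z : ℂ) :
    (ℑ (a + z • c) : V) = ℑ a + z.im • c := by
  simp [imaginaryPart_smul, hc.imaginaryPart, hc.coe_realPart]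

theorem det_ne_zero_of_posDef_imaginaryPart {m : Type*} [Fintype m] [DecidableEq m]
    {M : Matrix m m ℂ} (hM : (ℑ M : Matrix m m ℂ).PosDef) : M.det ≠ 0 := by
  intro hdet
  obtain ⟨v, hv, hMv⟩ := Matrix.exists_mulVec_eq_zero_iff.2 hdet
  have hre : (star v ⬝ᵥ (ℜ M : Matrix m m ℂ) *ᵥ v).im = 0 :=
    Matrix.IsHermitian.im_star_dotProduct_mulVec_self (ℜ M).2 v
  have him : 0 < (star v ⬝ᵥ (ℑ M : Matrix m m ℂ) *ᵥ v).re :=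
    (Complex.pos_iff.1 (hM.dotProduct_mulVec_pos hv)).1
  have hsum : (star v ⬝ᵥ M *ᵥ v).im = (star v ⬝ᵥ (ℑ M : Matrix m m ℂ) *ᵥ v).re := by
    conv_lhs => rw [← realPart_add_I_smul_imaginaryPart M]
    simp [Matrix.add_mulVec, Matrix.smul_mulVec, dotProduct_add, hre]
  rw [hMv, dotProduct_zero, Complex.zero_im] at hsum
  exact him.ne hsum

end ImaginaryPart

section MixedDiscriminant

open ComplexStarModule Polynomial

variable {n : ℕ}

/-- The mixed discriminant as a multilinear form; `detRowAlternating` is multilinear in rows, so it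
is fed the columns of its arguments. -/
noncomputable def mixedDiscMultilinear :
    MultilinearMap ℂ (fun _ : Fin n => Matrix (Fin n) (Fin n) ℂ) ℂ :=
  (n.factorial : ℂ)⁻¹ • ∑ σ : Equiv.Perm (Fin n),
    ((Matrix.detRowAlternating (n := Fin n) (R := ℂ)).toMultilinearMap.compLinearMap
      (fun j : Fin n => LinearMap.pi fun i => Matrix.entryLinearMap ℂ ℂ i j)).domDomCongr σ

theorem mixedDiscMultilinear_apply (A : Fin n → Matrix (Fin n) (Fin n) ℂ) :
    mixedDiscMultilinear A = mixedDisc A := by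
  simp only [mixedDiscMultilinear, mixedDisc, _root_.smul_apply, _root_.sum_apply, smul_eq_mul]
  congr 1
  refine Finset.sum_congr rfl fun σ _ => ?_
  rw [← Matrix.det_transpose]
  rfl

theorem mixedDisc_comp_perm (A : Fin n → Matrix (Fin n) (Fin n) ℂ) (τ : Equiv.Perm (Fin n)) :
    mixedDisc (A ∘ τ) = mixedDisc A :=
  congrArg ((n.factorial : ℂ)⁻¹ * ·) <| Fintype.sum_equiv (Equiv.mulLeft τ) _ _ fun _ => rfl

theorem mixedDisc_update_eq_of_eq {A : Fin n → Matrix (Fin n) (Fin n) ℂ} {p q : Fin n}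
    (h : A p = A q) (X : Matrix (Fin n) (Fin n) ℂ) :
    mixedDisc (Function.update A p X) = mixedDisc (Function.update A q X) := by
  rw [← mixedDisc_comp_perm _ (Equiv.swap p q)]
  congr 1
  ext1 i
  simp only [Function.comp_apply, Equiv.swap_apply_def, Function.update_apply]
  split_ifs <;> simp_all

theorem mixedDisc_const (M : Matrix (Fin n) (Fin n) ℂ) : mixedDisc (fun _ => M) = M.det := by
  have hM : (Matrix.of fun i j => M i j) = M := rfl
  have hn : (n.factorial : ℂ) ≠ 0 := by exact_mod_cast n.factorial_ne_zero
  simp [mixedDisc, hM, Fintype.card_perm, hn]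

theorem mixedDisc_conjTranspose (A : Fin n → Matrix (Fin n) (Fin n) ℂ) :
    mixedDisc (fun i => (A i)ᴴ) = star (mixedDisc A) := by
  simp only [mixedDisc, Matrix.det_apply', Matrix.of_apply, Matrix.conjTranspose_apply, star_mul',
    star_inv₀, star_natCast, star_sum, star_prod, star_intCast]
  congr 1
  rw [Finset.sum_comm]
  conv_rhs => rw [Finset.sum_comm]
  refine Fintype.sum_equiv (Equiv.inv _) _ _ fun τ => ?_
  refine Fintype.sum_equiv (Equiv.mulRight τ⁻¹) _ _ fun σ => ?_
  simp only [Equiv.inv_apply, Equiv.Perm.sign_inv, Equiv.coe_mulRight, Equiv.Perm.mul_apply]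
  congr 1
  exact Fintype.prod_equiv τ _ _ fun j => by simp

theorem ofReal_mixedDiscR {A : Fin n → Matrix (Fin n) (Fin n) ℂ} (hA : ∀ i, (A i).IsHermitian) :
    (mixedDiscR A : ℂ) = mixedDisc A := by
  refine Complex.conj_eq_iff_re.1 ?_
  rw [starRingEnd_apply, ← mixedDisc_conjTranspose]
  exact congrArg _ (funext hA)

theorem continuous_mixedDiscR :
    Continuous (mixedDiscR : (Fin n → Matrix (Fin n) (Fin n) ℂ) → ℝ) := by
  unfold mixedDiscR mixedDisc
  refine Complex.continuous_re.comp (continuous_const.mul (continuous_finsetSum _ fun σ _ => ?_))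
  refine Continuous.matrix_det (continuous_matrix fun i j => ?_)
  have hcol : Continuous fun A : Fin n → Matrix (Fin n) (Fin n) ℂ => A (σ j) :=
    continuous_apply (σ j)
  exact hcol.matrix_elem i j

theorem mixedDisc_piecewise_smul (U : Finset (Fin n)) (E : Fin n → Matrix (Fin n) (Fin n) ℂ)
    (c : ℂ) (N : Matrix (Fin n) (Fin n) ℂ) :
    mixedDisc (U.piecewise E fun _ => c • N) =
      c ^ Uᶜ.card * mixedDisc (U.piecewise E fun _ => N) := by
  have h := map_piecewise_smul_left mixedDiscMultilinear Uᶜ c E fun _ => N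
  rwa [mixedDiscMultilinear_apply, mixedDiscMultilinear_apply, Finset.piecewise_compl,
    Finset.piecewise_compl] at h

theorem eval_linePolynomial_mixedDisc (U : Finset (Fin n)) (E : Fin n → Matrix (Fin n) (Fin n) ℂ)
    (M N : Matrix (Fin n) (Fin n) ℂ) (z : ℂ) :
    (linePolynomial mixedDiscMultilinear Uᶜ (U.piecewise E fun _ => M) fun _ => N).eval z =
      mixedDisc (U.piecewise E fun _ => M + z • N) := by
  rw [eval_linePolynomial, mixedDiscMultilinear_apply]
  congr 1
  ext1 i
  by_cases hi : i ∈ U <;> simp [hi]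

theorem coeff_card_linePolynomial_mixedDisc (U : Finset (Fin n))
    (E : Fin n → Matrix (Fin n) (Fin n) ℂ) (M N : Matrix (Fin n) (Fin n) ℂ) :
    (linePolynomial mixedDiscMultilinear Uᶜ (U.piecewise E fun _ => M) fun _ => N).coeff Uᶜ.card =
      mixedDisc (U.piecewise E fun _ => N) := by
  rw [coeff_card_linePolynomial, mixedDiscMultilinear_apply, Finset.piecewise_compl]
  congr 1
  ext1 i
  by_cases hi : i ∈ U <;> simp [hi]

theorem coeff_one_linePolynomial_mixedDisc {U : Finset (Fin n)} {q : Fin n} (hq : q ∉ U)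
    (E : Fin n → Matrix (Fin n) (Fin n) ℂ) (M : Matrix (Fin n) (Fin n) ℂ) :
    (linePolynomial mixedDiscMultilinear Uᶜ (U.piecewise E fun _ => M) fun _ => E q).coeff 1 =
      Uᶜ.card * mixedDisc ((insert q U).piecewise E fun _ => M) := by
  rw [coeff_one_linePolynomial, Finset.piecewise_insert, ← nsmul_eq_mul]
  refine Finset.sum_eq_card_nsmul fun r hr => ?_
  rw [mixedDiscMultilinear_apply]
  refine mixedDisc_update_eq_of_eq ?_ _
  simp [hq, Finset.mem_compl.1 hr]

theorem mixedDisc_piecewise_ne_zero (U : Finset (Fin n)) {E : Fin n → Matrix (Fin n) (Fin n) ℂ}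
    (hE : ∀ i ∈ U, (E i).PosDef) {M : Matrix (Fin n) (Fin n) ℂ}
    (hM : (ℑ M : Matrix (Fin n) (Fin n) ℂ).PosDef) :
    mixedDisc (U.piecewise E fun _ => M) ≠ 0 := by
  induction U using Finset.induction_on generalizing M with
  | empty =>
    rw [Finset.piecewise_empty, mixedDisc_const]
    exact det_ne_zero_of_posDef_imaginaryPart hM
  | insert q U hq ih =>
    have ne_zero_U {N : Matrix (Fin n) (Fin n) ℂ} (hN : (ℑ N : Matrix (Fin n) (Fin n) ℂ).PosDef) :
        mixedDisc (U.piecewise E fun _ => N) ≠ 0 :=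
      ih (fun i hi => hE i (Finset.mem_insert_of_mem hi)) hN
    have hEq : (E q).PosDef := hE q (Finset.mem_insert_self q U)
    set P := linePolynomial mixedDiscMultilinear Uᶜ (U.piecewise E fun _ => M) fun _ => E q
    have eval_P (z : ℂ) (hz : 0 ≤ z.im) : P.eval z ≠ 0 := by
      rw [eval_linePolynomial_mixedDisc]
      refine ne_zero_U ?_
      rw [imaginaryPart_add_smul_of_isSelfAdjoint hEq.isHermitian.isSelfAdjoint]
      exact hM.add_posSemidef (hEq.posSemidef.smul hz)
    have lead_P : P.coeff Uᶜ.card ≠ 0 := by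
      have hI : (ℑ (Complex.I • E q) : Matrix (Fin n) (Fin n) ℂ).PosDef := by
        simpa [imaginaryPart_I_smul, hEq.isHermitian.isSelfAdjoint.coe_realPart] using hEq
      rw [coeff_card_linePolynomial_mixedDisc]
      exact right_ne_zero_of_mul (mixedDisc_piecewise_smul U E Complex.I (E q) ▸ ne_zero_U hI)
    have degree_P : P.natDegree ≠ 0 := by
      have hU : 0 < Uᶜ.card := Finset.card_pos.2 ⟨q, Finset.mem_compl.2 hq⟩
      exact (hU.trans_le (le_natDegree_of_ne_zero lead_P)).ne'
    have coeff_one_P : P.coeff 1 ≠ 0 := coeff_one_ne_zero_of_eval_ne_zero degree_P eval_P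
    rw [coeff_one_linePolynomial_mixedDisc hq] at coeff_one_P
    exact right_ne_zero_of_mul coeff_one_P

theorem mixedDisc_ne_zero_of_posDef {E : Fin n → Matrix (Fin n) (Fin n) ℂ}
    (hE : ∀ i, (E i).PosDef) : mixedDisc E ≠ 0 := by
  have h := mixedDisc_piecewise_ne_zero Finset.univ (fun i _ => hE i)
    (M := Complex.I • 1) (by simpa [imaginaryPart_I_smul] using Matrix.PosDef.one)
  rwa [Finset.piecewise_univ] at h

theorem convex_setOf_posDef {m : Type*} : Convex ℝ {X : Matrix m m ℂ | X.PosDef} :=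
  convex_iff_forall_pos.2 fun _ hX _ hY _ _ ha hb _ => (hX.smul ha).add (hY.smul hb)

theorem mixedDiscR_pos {E : Fin n → Matrix (Fin n) (Fin n) ℂ} (hE : ∀ i, (E i).PosDef) :
    0 < mixedDiscR E := by
  set K : Set (Fin n → Matrix (Fin n) (Fin n) ℂ) := Set.univ.pi fun _ => {X | X.PosDef}
  have hK : Convex ℝ K := convex_pi fun _ _ => convex_setOf_posDef
  have hone : mixedDiscR (fun _ : Fin n => 1) = 1 := by simp [mixedDiscR, mixedDisc_const]
  by_contra! hneg
  obtain ⟨F, hF, hF0⟩ := hK.isPreconnected.intermediate_value (fun i _ => hE i)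
    (fun _ _ => Matrix.PosDef.one) continuous_mixedDiscR.continuousOn
    ⟨hneg, hone.ge.trans' zero_le_one⟩
  have hFpos (i : Fin n) : (F i).PosDef := hF i trivial
  refine mixedDisc_ne_zero_of_posDef hFpos ?_
  rw [← ofReal_mixedDiscR fun i => (hFpos i).isHermitian, hF0, Complex.ofReal_zero]

theorem mixedDisc_piecewise_compl_pair {E : Fin n → Matrix (Fin n) (Fin n) ℂ} {p q : Fin n}
    (hpq : p ≠ q) (hEpq : E p = E q) (A : Matrix (Fin n) (Fin n) ℂ) (z : ℂ) :
    mixedDisc (({p, q}ᶜ : Finset (Fin n)).piecewise E fun _ => E p + z • A) =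
      mixedDisc (Function.update (Function.update E p A) q A) * (z * z) +
        2 * mixedDisc (Function.update E p A) * z + mixedDisc E := by
  have hexpand := eval_linePolynomial_pair mixedDiscMultilinear hpq E (fun _ => A) z
  simp only [eval_linePolynomial, mixedDiscMultilinear_apply, ← mixedDisc_update_eq_of_eq hEpq,
    ← two_mul] at hexpand
  rw [← hexpand, Finset.piecewise_compl]
  refine congrArg mixedDisc (Finset.piecewise_congr _ (fun i hi => ?_) fun _ _ => rfl)
  obtain rfl | rfl : i = p ∨ i = q := by simpa using hi
  · rfl
  · simp [hEpq]

theorem mixedDiscR_mul_le_sq {E : Fin n → Matrix (Fin n) (Fin n) ℂ} {p q : Fin n} (hpq : p ≠ q)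
    (hEpq : E p = E q) (hEp : (E p).IsHermitian) (hE : ∀ i, i ≠ p → i ≠ q → (E i).PosDef)
    {A : Matrix (Fin n) (Fin n) ℂ} (hA : A.PosDef) :
    mixedDiscR E * mixedDiscR (Function.update (Function.update E p A) q A) ≤
      mixedDiscR (Function.update E p A) ^ 2 := by
  have hE' (i : Fin n) : (E i).IsHermitian := by
    by_cases hp : i = p
    · exact hp ▸ hEp
    by_cases hq : i = q
    · exact hq ▸ hEpq ▸ hEp
    · exact (hE i hp hq).isHermitian
  have hupdate {X : Fin n → Matrix (Fin n) (Fin n) ℂ} (hX : ∀ i, (X i).IsHermitian) (r i : Fin n) :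
      (Function.update X r A i).IsHermitian := by
    by_cases hi : i = r
    · simpa [hi] using hA.isHermitian
    · simpa [hi] using hX i
  have hquad := discrim_nonneg_of_forall_im_pos_ne_zero
    (a := mixedDiscR (Function.update (Function.update E p A) q A))
    (b := 2 * mixedDiscR (Function.update E p A)) (c := mixedDiscR E) fun z hz => by
    push_cast
    rw [ofReal_mixedDiscR (hupdate (hupdate hE' p) q), ofReal_mixedDiscR (hupdate hE' p),
      ofReal_mixedDiscR hE', ← mixedDisc_piecewise_compl_pair hpq hEpq]
    refine mixedDisc_piecewise_ne_zero _ (fun i hi => ?_) ?_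
    · obtain ⟨hip, hiq⟩ : i ≠ p ∧ i ≠ q := by simpa using hi
      exact hE i hip hiq
    · rw [imaginaryPart_add_smul_of_isSelfAdjoint hA.isHermitian.isSelfAdjoint,
        hEp.isSelfAdjoint.imaginaryPart]
      simpa using hA.smul hz
  rw [discrim] at hquad
  linarith

end MixedDiscriminant

section StepFamily

variable {n : ℕ} {α : Type*}

/-- The family `A, …, A, B, …, B, C k, …, C (n - 1)` with `A` in the first `m` places and `B` in the
remaining ones of the first `k`. -/
def stepFamily (A B : α) (C : Fin n → α) (k m : ℕ) : Fin n → α :=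
  fun i => if (i : ℕ) < m then A else if (i : ℕ) < k then B else C i

theorem stepFamily_zero (A B : α) (C : Fin n → α) (k : ℕ) :
    stepFamily A B C k 0 = fun i : Fin n => if (i : ℕ) < k then B else C i :=
  funext fun i => if_neg (Nat.not_lt_zero i)

theorem stepFamily_self (A B : α) (C : Fin n → α) (k : ℕ) :
    stepFamily A B C k k = fun i : Fin n => if (i : ℕ) < k then A else C i := by
  ext1 i
  rw [stepFamily]
  split_ifs <;> rfl

theorem stepFamily_succ (A B : α) (C : Fin n → α) (k : ℕ) {m : ℕ} (hm : m < n) :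
    stepFamily A B C k (m + 1) = Function.update (stepFamily A B C k m) ⟨m, hm⟩ A := by
  ext1 i
  simp only [stepFamily, Function.update_apply, Fin.ext_iff]
  split_ifs <;> first | rfl | lia

theorem continuous_stepFamily [TopologicalSpace α] (k m : ℕ) :
    Continuous fun X : α × α × (Fin n → α) => stepFamily X.1 X.2.1 X.2.2 k m := by
  refine continuous_pi fun i => ?_
  unfold stepFamily
  split_ifs <;> fun_prop

theorem forall_stepFamily {P : α → Prop} {A B : α} {C : Fin n → α} {k : ℕ} (hA : P A) (hB : P B)
    (hC : ∀ i : Fin n, k ≤ (i : ℕ) → P (C i)) (m : ℕ) (i : Fin n) :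
    P (stepFamily A B C k m i) := by
  unfold stepFamily
  split_ifs with _ hik
  exacts [hA, hB, hC i (not_lt.1 hik)]

theorem mixedDiscR_stepFamily_logConcave {A B : Matrix (Fin n) (Fin n) ℂ}
    {C : Fin n → Matrix (Fin n) (Fin n) ℂ} {k m : ℕ} (hA : A.PosDef) (hB : B.PosDef)
    (hC : ∀ i : Fin n, k ≤ (i : ℕ) → (C i).PosDef) (hkn : k ≤ n) (hmk : m + 2 ≤ k) :
    mixedDiscR (stepFamily A B C k m) * mixedDiscR (stepFamily A B C k (m + 2)) ≤
      mixedDiscR (stepFamily A B C k (m + 1)) ^ 2 := by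
  have hF := forall_stepFamily hA hB hC m
  have eq_B (i : Fin n) (hmi : m ≤ i) (hik : i < k) : stepFamily A B C k m i = B := by
    simp [stepFamily, hmi.not_gt, hik]
  rw [stepFamily_succ A B C k (m := m + 1) (by lia), stepFamily_succ A B C k (m := m) (by lia)]
  exact mixedDiscR_mul_le_sq (by simp)
    ((eq_B _ le_rfl (by dsimp only; lia)).trans (eq_B _ (Nat.le_succ m) (by dsimp only; lia)).symm)
    (hF _).isHermitian (fun i _ _ => hF i) hA

theorem mixedDiscR_stepFamily_pow_le_of_posDef {A B : Matrix (Fin n) (Fin n) ℂ}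
    {C : Fin n → Matrix (Fin n) (Fin n) ℂ} {l k : ℕ} (hA : A.PosDef) (hB : B.PosDef)
    (hC : ∀ i : Fin n, k ≤ (i : ℕ) → (C i).PosDef) (hlk : l ≤ k) (hkn : k ≤ n) :
    mixedDiscR (stepFamily A B C k k) ^ l * mixedDiscR (stepFamily A B C k 0) ^ (k - l) ≤
      mixedDiscR (stepFamily A B C k l) ^ k :=
  pow_mul_pow_le_pow_of_logConcave (a := fun m => mixedDiscR (stepFamily A B C k m)) hlk
    (fun m _ => mixedDiscR_pos (forall_stepFamily hA hB hC m))
    fun _ hm => mixedDiscR_stepFamily_logConcave hA hB hC hkn hm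

end StepFamily

theorem posSemidef_mem_closure_posDef {m : Type*} {X : Matrix m m ℂ}
    (hX : X.PosSemidef) : X ∈ closure {Y : Matrix m m ℂ | Y.PosDef} := by
  have hlim : Filter.Tendsto (fun t : ℝ => X + t • (1 : Matrix m m ℂ)) (nhdsWithin 0 (Set.Ioi 0))
      (nhds X) := by
    have hcont : Continuous fun t : ℝ => X + t • (1 : Matrix m m ℂ) := by fun_prop
    simpa using (hcont.tendsto 0).mono_left nhdsWithin_le_nhds
  refine mem_closure_of_tendsto hlim ?_
  filter_upwards [self_mem_nhdsWithin] with t ht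
  exact Matrix.PosDef.posSemidef_add hX (Matrix.PosDef.one.smul ht)

/-- Iterated Alexandrov–Fenchel inequality: for `0 ≤ l ≤ k ≤ n` and positive semi-definite
`A, B, A⁽ᵏ⁺¹⁾, …, A⁽ⁿ⁾`,
`D(A[l], B[k-l], rest)^k ≥ D(A[k], rest)^l · D(B[k], rest)^(k-l)`. -/
theorem alexandrov_fenchel_iterated {n : ℕ} (hn : 1 ≤ n) (l k : ℕ) (hlk : l ≤ k) (hkn : k ≤ n)
    (A B : Matrix (Fin n) (Fin n) ℂ) (hA : A.PosSemidef) (hB : B.PosSemidef)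
    (C : Fin n → Matrix (Fin n) (Fin n) ℂ) (hC : ∀ i : Fin n, k ≤ (i : ℕ) → (C i).PosSemidef) :
    mixedDiscR (fun i => if (i : ℕ) < k then A else C i) ^ l
        * mixedDiscR (fun i => if (i : ℕ) < k then B else C i) ^ (k - l)
      ≤ mixedDiscR (fun i => if (i : ℕ) < l then A else if (i : ℕ) < k then B else C i) ^ k := by
  let D (m : ℕ) (X : Matrix (Fin n) (Fin n) ℂ × Matrix (Fin n) (Fin n) ℂ ×
      (Fin n → Matrix (Fin n) (Fin n) ℂ)) : ℝ := mixedDiscR (stepFamily X.1 X.2.1 X.2.2 k m)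
  let K : Set (Matrix (Fin n) (Fin n) ℂ) := {X | X.PosDef}
  let S := K ×ˢ K ×ˢ Set.pi {i : Fin n | k ≤ (i : ℕ)} fun _ => K
  have hD (m : ℕ) : Continuous (D m) := continuous_mixedDiscR.comp (continuous_stepFamily k m)
  have hABC : (A, B, C) ∈ closure S := by
    simp only [S, closure_prod_eq, closure_pi_set]
    exact ⟨posSemidef_mem_closure_posDef hA, posSemidef_mem_closure_posDef hB,
      fun i hi => posSemidef_mem_closure_posDef (hC i hi)⟩
  have hposDef : ∀ X ∈ S, D k X ^ l * D 0 X ^ (k - l) ≤ D l X ^ k := fun _ ⟨hA', hB', hC'⟩ =>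
    mixedDiscR_stepFamily_pow_le_of_posDef hA' hB' hC' hlk hkn
  have hle : D k (A, B, C) ^ l * D 0 (A, B, C) ^ (k - l) ≤ D l (A, B, C) ^ k :=
    le_on_closure hposDef (((hD k).pow l).mul ((hD 0).pow (k - l))).continuousOn
      ((hD l).pow k).continuousOn hABC
  rw [← stepFamily_self A B C k, ← stepFamily_zero A B C k]
  exact hle
end

section
/- Let A be an n×n Hermitian positive definite matrix and C an n×n Hermitian matrix. Define T = ∫_0^∞ (A+τI)^{−1} C (A+τI)^{−1} dτ and R = 2∫_0^∞ (A+τI)^{−1} C (A+τI)^{−1} C (A+τI)^{−1} dτ. Then for any nonnegative real numbers b_1,…,b_n: Σ_{i=1}^n R_{ii} b_i ≥ ∫_0^1 Σ_{i=1}^n Σ_{j=1}^n T_{ij} b_j^s T_{ji} b_i^{1−s} ds. -/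
open Matrix MeasureTheory Finset ProbabilityTheory
open scoped Classical ComplexOrder

/-!
Let `X s` solve the Sylvester equation `(1 - s) • (A * X) + s • (X * B) = C`. In eigenbases of `A`
and `B`, the Feynman substitution `τ = y * s / (1 - s)` turns the resolvent integrals of
`(A + τ)⁻¹ C (B + τ)⁻¹` and `(A + τ)⁻¹ C (B + τ)⁻¹ Cᴴ (A + τ)⁻¹` over `(0, ∞)` into those of `X s`
and `(1 - s) X s (X s)ᴴ` over `(0, 1)`; exchanging `A` and `B` gives `s (X s)ᴴ X s` likewise.
Each entry of `∫ X s` is then estimated by the Cauchy–Schwarz inequality with weight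
`(1 - s) x + s y`, because the integral of `((1 - s) x + s y)⁻¹` is the reciprocal of the
logarithmic mean `∫ x ^ (1 - s) y ^ s` of `x` and `y`.
-/

section FeynmanParameters

theorem segment_pos {x y s : ℝ} (hx : 0 < x) (hy : 0 < y) (hs : s ∈ Set.Icc (0 : ℝ) 1) :
    0 < (1 - s) * x + s * y :=
  convex_Ioi (0 : ℝ) hx hy (sub_nonneg.2 hs.2) hs.1 (by ring)

theorem continuousOn_inv_segment {x y : ℝ} (hx : 0 < x) (hy : 0 < y) :
    ContinuousOn (fun s : ℝ => ((1 - s) * x + s * y)⁻¹) (Set.Icc 0 1) :=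
  ContinuousOn.inv₀ (by fun_prop) fun _ hs => (segment_pos hx hy hs).ne'

theorem image_mul_div_one_sub_Ioo {y : ℝ} (hy : 0 < y) :
    (fun s : ℝ => y * s / (1 - s)) '' Set.Ioo 0 1 = Set.Ioi 0 := by
  ext τ
  constructor
  · rintro ⟨s, hs, rfl⟩
    exact div_pos (mul_pos hy hs.1) (sub_pos.2 hs.2)
  · intro hτ
    have hτ : 0 < τ := hτ
    refine ⟨τ / (y + τ), ⟨by positivity, (div_lt_one (by positivity)).2 (by linarith)⟩, ?_⟩
    have : 1 - τ / (y + τ) = y / (y + τ) := by field_simp; ring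
    simp only [this]
    field_simp

theorem injOn_mul_div_one_sub {y : ℝ} (hy : y ≠ 0) :
    Set.InjOn (fun s : ℝ => y * s / (1 - s)) (Set.Ioo 0 1) := by
  intro s hs t ht hst
  have hs' := (sub_pos.2 hs.2).ne'
  have ht' := (sub_pos.2 ht.2).ne'
  field_simp at hst
  linarith

theorem hasDerivAt_mul_div_one_sub (y : ℝ) {s : ℝ} (hs : s ≠ 1) :
    HasDerivAt (fun s : ℝ => y * s / (1 - s)) (y / (1 - s) ^ 2) s := by
  have hs' : 1 - s ≠ 0 := sub_ne_zero.2 hs.symm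
  refine (((hasDerivAt_id' s).const_mul y).div ((hasDerivAt_id' s).const_sub 1) hs').congr_deriv ?_
  ring

theorem integrableOn_Ioi_and_integral_eq_of_mul_div_one_sub {E : Type*} [NormedAddCommGroup E]
    [NormedSpace ℝ E] {f g : ℝ → E} {y : ℝ} (hy : 0 < y) (hg : IntervalIntegrable g volume 0 1)
    (hfg : ∀ s ∈ Set.Ioo (0 : ℝ) 1, (y / (1 - s) ^ 2) • f (y * s / (1 - s)) = g s) :
    IntegrableOn f (Set.Ioi 0) ∧ ∫ τ in Set.Ioi 0, f τ = ∫ s in (0 : ℝ)..1, g s := by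
  have hderiv : ∀ s ∈ Set.Ioo (0 : ℝ) 1,
      HasDerivWithinAt (fun s => y * s / (1 - s)) (y / (1 - s) ^ 2) (Set.Ioo 0 1) s :=
    fun s hs => (hasDerivAt_mul_div_one_sub y hs.2.ne).hasDerivWithinAt
  have hEq : Set.EqOn g (fun s => |y / (1 - s) ^ 2| • f (y * s / (1 - s))) (Set.Ioo 0 1) := by
    intro s hs
    simp only [abs_of_nonneg (show 0 ≤ y / (1 - s) ^ 2 by positivity), hfg s hs]
  rw [← image_mul_div_one_sub_Ioo hy]
  constructor
  · rw [integrableOn_image_iff_integrableOn_abs_deriv_smul measurableSet_Ioo hderiv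
      (injOn_mul_div_one_sub hy.ne')]
    rw [intervalIntegrable_iff_integrableOn_Ioo_of_le zero_le_one] at hg
    exact hg.congr_fun hEq measurableSet_Ioo
  · rw [integral_image_eq_integral_abs_deriv_smul measurableSet_Ioo hderiv
      (injOn_mul_div_one_sub hy.ne'), intervalIntegral.integral_of_le zero_le_one,
      integral_Ioc_eq_integral_Ioo]
    exact (setIntegral_congr_fun measurableSet_Ioo hEq).symm

theorem add_mul_div_one_sub (x y : ℝ) {s : ℝ} (hs : s ≠ 1) :
    x + y * s / (1 - s) = ((1 - s) * x + s * y) / (1 - s) := by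
  have hs' : 1 - s ≠ 0 := sub_ne_zero.2 hs.symm
  field_simp

theorem self_add_mul_div_one_sub (y : ℝ) {s : ℝ} (hs : s ≠ 1) :
    y + y * s / (1 - s) = y / (1 - s) := by
  rw [add_mul_div_one_sub y y hs]
  ring

theorem integrableOn_and_integral_Ioi_inv_mul {x y : ℝ} (hx : 0 < x) (hy : 0 < y) :
    IntegrableOn (fun τ => ((x + τ) * (y + τ))⁻¹) (Set.Ioi 0) ∧
      ∫ τ in Set.Ioi 0, ((x + τ) * (y + τ))⁻¹ = ∫ s in (0 : ℝ)..1, ((1 - s) * x + s * y)⁻¹ := by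
  refine integrableOn_Ioi_and_integral_eq_of_mul_div_one_sub hy
    ((continuousOn_inv_segment hx hy).intervalIntegrable_of_Icc zero_le_one) fun s hs => ?_
  have hs' := (sub_pos.2 hs.2).ne'
  rw [add_mul_div_one_sub x y hs.2.ne, self_add_mul_div_one_sub y hs.2.ne, smul_eq_mul]
  field_simp

theorem continuousOn_one_sub_mul_inv_segment_mul {x y z : ℝ} (hx : 0 < x) (hy : 0 < y)
    (hz : 0 < z) :
    ContinuousOn (fun s : ℝ => (1 - s) * (((1 - s) * x + s * y)⁻¹ * ((1 - s) * z + s * y)⁻¹))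
      (Set.Icc 0 1) :=
  ContinuousOn.mul (by fun_prop)
    ((continuousOn_inv_segment hx hy).mul (continuousOn_inv_segment hz hy))

theorem integrableOn_and_integral_Ioi_inv_mul_mul {x y z : ℝ} (hx : 0 < x) (hy : 0 < y)
    (hz : 0 < z) :
    IntegrableOn (fun τ => ((x + τ) * (y + τ) * (z + τ))⁻¹) (Set.Ioi 0) ∧
      ∫ τ in Set.Ioi 0, ((x + τ) * (y + τ) * (z + τ))⁻¹ =
        ∫ s in (0 : ℝ)..1, (1 - s) * (((1 - s) * x + s * y)⁻¹ * ((1 - s) * z + s * y)⁻¹) := by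
  refine integrableOn_Ioi_and_integral_eq_of_mul_div_one_sub hy
    ((continuousOn_one_sub_mul_inv_segment_mul hx hy hz).intervalIntegrable_of_Icc zero_le_one)
    fun s hs => ?_
  have hs' := (sub_pos.2 hs.2).ne'
  rw [add_mul_div_one_sub x y hs.2.ne, self_add_mul_div_one_sub y hs.2.ne,
    add_mul_div_one_sub z y hs.2.ne, smul_eq_mul]
  field_simp

end FeynmanParameters

section LogarithmicMean

/-- The logarithmic mean `(y - x) / (log y - log x)` of two nonnegative reals, in the integral form
that also covers `x = y`. It vanishes when `x` or `y` does; the convention `0 ^ 0 = 1` only affects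
the endpoints of the interval of integration. -/
noncomputable def logMean (x y : ℝ) : ℝ := ∫ s in (0 : ℝ)..1, x ^ (1 - s) * y ^ s

theorem eqOn_rpow_mul_rpow_zero {x y : ℝ} (h : x = 0 ∨ y = 0) :
    Set.EqOn (fun s : ℝ => x ^ (1 - s) * y ^ s) 0 (Set.Ioo 0 1) := by
  rintro s ⟨hs₀, hs₁⟩
  rcases h with rfl | rfl
  · simp [Real.zero_rpow (sub_pos.2 hs₁).ne']
  · simp [Real.zero_rpow hs₀.ne']

theorem logMean_eq_zero {x y : ℝ} (h : x = 0 ∨ y = 0) : logMean x y = 0 := by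
  rw [logMean, intervalIntegral.integral_of_le zero_le_one, integral_Ioc_eq_integral_Ioo,
    setIntegral_congr_fun measurableSet_Ioo (eqOn_rpow_mul_rpow_zero h)]
  exact integral_zero _ _

theorem intervalIntegrable_rpow_mul_rpow (x y : ℝ) :
    IntervalIntegrable (fun s : ℝ => x ^ (1 - s) * y ^ s) volume 0 1 := by
  by_cases h : x = 0 ∨ y = 0
  · rw [intervalIntegrable_iff_integrableOn_Ioo_of_le zero_le_one]
    exact integrableOn_zero.congr_fun (eqOn_rpow_mul_rpow_zero h).symm measurableSet_Ioo
  · push Not at h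
    exact (((Real.continuous_const_rpow h.1).comp (by fun_prop)).mul
      (Real.continuous_const_rpow h.2)).intervalIntegrable _ _

theorem integral_sum_sum_mul_rpow_mul_rpow {ι : Type*} [Fintype ι]
    (c : ι → ι → ℝ) (b : ι → ℝ) :
    ∫ s in (0 : ℝ)..1, ∑ i, ∑ j, c i j * (b j ^ s) * (b i ^ (1 - s)) =
      ∑ i, ∑ j, logMean (b i) (b j) * c i j := by
  have hterm (i j : ι) (s : ℝ) :
      c i j * (b j ^ s) * (b i ^ (1 - s)) = b i ^ (1 - s) * b j ^ s * c i j := by ring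
  have hint (i j : ι) := (intervalIntegrable_rpow_mul_rpow (b i) (b j)).mul_const (c i j)
  simp only [hterm]
  rw [intervalIntegral.integral_finsetSum fun i _ => ?_]
  · refine sum_congr rfl fun i _ => ?_
    rw [intervalIntegral.integral_finsetSum fun j _ => hint i j]
    simp only [intervalIntegral.integral_mul_const, logMean]
  · simpa only [Finset.sum_fn] using IntervalIntegrable.sum univ fun j _ => hint i j

theorem log_sub_log_mul_logMean {x y : ℝ} (hx : 0 < x) (hy : 0 < y) :
    (Real.log y - Real.log x) * logMean x y = y - x := by
  have hexp (s : ℝ) : x ^ (1 - s) * y ^ s =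
      Real.exp (Real.log x + (Real.log y - Real.log x) * s) := by
    rw [Real.rpow_def_of_pos hx, Real.rpow_def_of_pos hy, ← Real.exp_add]
    ring_nf
  simp only [logMean, hexp]
  rw [intervalIntegral.mul_integral_comp_add_mul (f := Real.exp), integral_exp]
  simp [Real.exp_log hx, Real.exp_log hy]

theorem sub_mul_integral_inv_segment {x y : ℝ} (hx : 0 < x) (hy : 0 < y) :
    (y - x) * ∫ s in (0 : ℝ)..1, ((1 - s) * x + s * y)⁻¹ = Real.log y - Real.log x := by
  have hseg (s : ℝ) : (1 - s) * x + s * y = x + (y - x) * s := by ring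
  simp only [hseg]
  rw [intervalIntegral.mul_integral_comp_add_mul (f := fun u => u⁻¹)]
  simp [integral_inv_of_pos hx hy, Real.log_div hy.ne' hx.ne']

theorem logMean_mul_integral_inv_segment {x y : ℝ} (hx : 0 < x) (hy : 0 < y) :
    logMean x y * ∫ s in (0 : ℝ)..1, ((1 - s) * x + s * y)⁻¹ = 1 := by
  rcases eq_or_ne x y with rfl | hxy
  · have h₁ (s : ℝ) : x ^ (1 - s) * x ^ s = x := by rw [← Real.rpow_add hx]; simp
    have h₂ (s : ℝ) : (1 - s) * x + s * x = x := by ring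
    simp [logMean, h₁, h₂, hx.ne']
  · refine mul_left_cancel₀ (sub_ne_zero.2 hxy.symm) ?_
    rw [mul_left_comm, sub_mul_integral_inv_segment hx hy, mul_comm (logMean x y),
      log_sub_log_mul_logMean hx hy, mul_one]

theorem logMean_nonneg {x y : ℝ} (hx : 0 ≤ x) (hy : 0 ≤ y) : 0 ≤ logMean x y :=
  intervalIntegral.integral_nonneg zero_le_one fun _ _ => by positivity

theorem sq_norm_integral_le_integral_inv_mul {α E : Type*} [MeasurableSpace α] {μ : Measure α}
    [NormedAddCommGroup E] [NormedSpace ℝ E] {f : α → E} {w : α → ℝ} (hw : ∀ᵐ t ∂μ, 0 < w t)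
    (hf : Integrable f μ) (hinv : Integrable (fun t => (w t)⁻¹) μ)
    (hfw : Integrable (fun t => ‖f t‖ ^ 2 * w t) μ) :
    ‖∫ t, f t ∂μ‖ ^ 2 ≤ (∫ t, (w t)⁻¹ ∂μ) * ∫ t, ‖f t‖ ^ 2 * w t ∂μ := by
  have hquad (c : ℝ) : 0 ≤ (∫ t, (w t)⁻¹ ∂μ) * (c * c) + -(2 * ∫ t, ‖f t‖ ∂μ) * c +
      ∫ t, ‖f t‖ ^ 2 * w t ∂μ := by
    calc 0 ≤ ∫ t, (w t)⁻¹ * (c * c) - 2 * ‖f t‖ * c + ‖f t‖ ^ 2 * w t ∂μ := by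
          refine integral_nonneg_of_ae (hw.mono fun t ht => ?_)
          have hsq : (w t)⁻¹ * (c * c) - 2 * ‖f t‖ * c + ‖f t‖ ^ 2 * w t =
              (c - ‖f t‖ * w t) ^ 2 / w t := by
            field_simp
            ring
          simp only [Pi.zero_apply, hsq]
          positivity
      _ = _ := by
          have h₁ := hinv.mul_const (c * c)
          have h₂ := (hf.norm.const_mul 2).mul_const c
          rw [integral_add (f := fun t => (w t)⁻¹ * (c * c) - 2 * ‖f t‖ * c) (h₁.sub h₂) hfw,
            integral_sub h₁ h₂, integral_mul_const, integral_mul_const, integral_const_mul]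
          ring
  have hdiscrim := discrim_le_zero hquad
  rw [discrim] at hdiscrim
  calc ‖∫ t, f t ∂μ‖ ^ 2 ≤ (∫ t, ‖f t‖ ∂μ) ^ 2 := by
        gcongr
        exact norm_integral_le_integral_norm f
    _ ≤ _ := by linarith

theorem logMean_mul_sq_norm_integral_le {E : Type*} [NormedAddCommGroup E] [NormedSpace ℝ E]
    {f : ℝ → E} (hf : ContinuousOn f (Set.Icc 0 1)) {x y : ℝ} (hx : 0 ≤ x) (hy : 0 ≤ y) :
    logMean x y * ‖∫ s in (0 : ℝ)..1, f s‖ ^ 2 ≤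
      ∫ s in (0 : ℝ)..1, ‖f s‖ ^ 2 * ((1 - s) * x + s * y) := by
  by_cases h : x = 0 ∨ y = 0
  · rw [logMean_eq_zero h, zero_mul]
    refine intervalIntegral.integral_nonneg zero_le_one fun s hs => ?_
    have := sub_nonneg.2 hs.2
    have := hs.1
    positivity
  · push Not at h
    replace hx := hx.lt_of_ne' h.1
    replace hy := hy.lt_of_ne' h.2
    have hfw : ContinuousOn (fun s => ‖f s‖ ^ 2 * ((1 - s) * x + s * y)) (Set.Icc 0 1) := by
      fun_prop
    have hCS : ‖∫ s in (0 : ℝ)..1, f s‖ ^ 2 ≤ (∫ s in (0 : ℝ)..1, ((1 - s) * x + s * y)⁻¹) *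
        ∫ s in (0 : ℝ)..1, ‖f s‖ ^ 2 * ((1 - s) * x + s * y) := by
      simp only [intervalIntegral.integral_of_le zero_le_one]
      refine sq_norm_integral_le_integral_inv_mul ?_ ?_ ?_ ?_
      · exact (ae_restrict_iff' measurableSet_Ioc).2
          (.of_forall fun s hs => segment_pos hx hy (Set.Ioc_subset_Icc_self hs))
      · exact (hf.intervalIntegrable_of_Icc zero_le_one).1
      · exact ((continuousOn_inv_segment hx hy).intervalIntegrable_of_Icc zero_le_one).1
      · exact (hfw.intervalIntegrable_of_Icc zero_le_one).1
    calc logMean x y * ‖∫ s in (0 : ℝ)..1, f s‖ ^ 2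
        ≤ logMean x y * ((∫ s in (0 : ℝ)..1, ((1 - s) * x + s * y)⁻¹) *
            ∫ s in (0 : ℝ)..1, ‖f s‖ ^ 2 * ((1 - s) * x + s * y)) :=
          mul_le_mul_of_nonneg_left hCS (logMean_nonneg hx.le hy.le)
      _ = ∫ s in (0 : ℝ)..1, ‖f s‖ ^ 2 * ((1 - s) * x + s * y) := by
          rw [← mul_assoc, logMean_mul_integral_inv_segment hx hy, one_mul]

end LogarithmicMean

section EigenbasisCoordinates

theorem mul_conjTranspose_apply_self {𝕜 m n : Type*} [RCLike 𝕜] [Fintype n]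
    (X : Matrix m n 𝕜) (i : m) :
    (X * Xᴴ) i i = ((∑ j, ‖X i j‖ ^ 2 : ℝ) : 𝕜) := by
  simp only [mul_apply, conjTranspose_apply, RCLike.star_def, RCLike.mul_conj, RCLike.ofReal_sum,
    RCLike.ofReal_pow]

variable {𝕜 l m n : Type*} [RCLike 𝕜] [Fintype l] [DecidableEq l] [Fintype m] [DecidableEq m]
  [Fintype n] [DecidableEq n] {A : Matrix m m 𝕜} {B : Matrix n n 𝕜} {L : Matrix l l 𝕜}

/-- The matrix of `C` in the orthonormal eigenbases of `A` (for the rows) and `B` (for the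
columns). -/
noncomputable def toEigenbases (hA : A.IsHermitian) (hB : B.IsHermitian) (C : Matrix m n 𝕜) :
    Matrix m n 𝕜 :=
  (hA.eigenvectorUnitary : Matrix m m 𝕜)ᴴ * C * (hB.eigenvectorUnitary : Matrix n n 𝕜)

/-- The matrix whose coordinates in the orthonormal eigenbases of `A` and `B` are `D`; inverse
to `toEigenbases`. -/
noncomputable def ofEigenbases (hA : A.IsHermitian) (hB : B.IsHermitian) (D : Matrix m n 𝕜) :
    Matrix m n 𝕜 :=
  (hA.eigenvectorUnitary : Matrix m m 𝕜) * D * (hB.eigenvectorUnitary : Matrix n n 𝕜)ᴴ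

theorem ofEigenbases_toEigenbases (hA : A.IsHermitian) (hB : B.IsHermitian) (C : Matrix m n 𝕜) :
    ofEigenbases hA hB (toEigenbases hA hB C) = C := by
  have hU := Unitary.coe_mul_star_self hA.eigenvectorUnitary
  have hW := Unitary.coe_mul_star_self hB.eigenvectorUnitary
  rw [Unitary.coe_star, star_eq_conjTranspose] at hU hW
  simp only [ofEigenbases, toEigenbases, Matrix.mul_assoc, hW, Matrix.mul_one]
  rw [← Matrix.mul_assoc, hU, Matrix.one_mul]

theorem ofEigenbases_mul_ofEigenbases (hA : A.IsHermitian) (hL : L.IsHermitian)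
    (hB : B.IsHermitian) (X : Matrix m l 𝕜) (Y : Matrix l n 𝕜) :
    ofEigenbases hA hL X * ofEigenbases hL hB Y = ofEigenbases hA hB (X * Y) := by
  have hU := Unitary.coe_star_mul_self hL.eigenvectorUnitary
  rw [star_eq_conjTranspose] at hU
  simp only [ofEigenbases, Matrix.mul_assoc]
  rw [← Matrix.mul_assoc _ᴴ _ (Y * _), hU, Matrix.one_mul]

theorem ofEigenbases_one (hA : A.IsHermitian) : ofEigenbases hA hA 1 = 1 := by
  rw [ofEigenbases, Matrix.mul_one]
  exact Unitary.coe_mul_star_self hA.eigenvectorUnitary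

theorem conjTranspose_toEigenbases (hA : A.IsHermitian) (hB : B.IsHermitian) (C : Matrix m n 𝕜) :
    (toEigenbases hA hB C)ᴴ = toEigenbases hB hA Cᴴ := by
  simp only [toEigenbases, conjTranspose_mul, conjTranspose_conjTranspose, Matrix.mul_assoc]

theorem conjTranspose_ofEigenbases (hA : A.IsHermitian) (hB : B.IsHermitian) (D : Matrix m n 𝕜) :
    (ofEigenbases hA hB D)ᴴ = ofEigenbases hB hA Dᴴ := by
  simp only [ofEigenbases, conjTranspose_mul, conjTranspose_conjTranspose, Matrix.mul_assoc]

theorem ofEigenbases_add (hA : A.IsHermitian) (hB : B.IsHermitian) (D D' : Matrix m n 𝕜) :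
    ofEigenbases hA hB (D + D') = ofEigenbases hA hB D + ofEigenbases hA hB D' := by
  simp only [ofEigenbases, Matrix.mul_add, Matrix.add_mul]

theorem ofEigenbases_smul (hA : A.IsHermitian) (hB : B.IsHermitian) (c : 𝕜) (D : Matrix m n 𝕜) :
    ofEigenbases hA hB (c • D) = c • ofEigenbases hA hB D := by
  simp only [ofEigenbases, Matrix.mul_smul, Matrix.smul_mul]

theorem continuous_ofEigenbases (hA : A.IsHermitian) (hB : B.IsHermitian) :
    Continuous (ofEigenbases hA hB : Matrix m n 𝕜 → Matrix m n 𝕜) :=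
  (continuous_const.matrix_mul continuous_id).matrix_mul continuous_const

theorem integral_ofEigenbases_apply {α : Type*} [MeasurableSpace α] {μ : Measure α}
    (hA : A.IsHermitian) (hB : B.IsHermitian) {M : α → Matrix m n 𝕜}
    (hM : ∀ p q, Integrable (fun t => M t p q) μ) (i : m) (j : n) :
    ∫ t, ofEigenbases hA hB (M t) i j ∂μ =
      ofEigenbases hA hB (of fun p q => ∫ t, M t p q ∂μ) i j := by
  have hsum (P : Matrix m m 𝕜) (q : n) : Integrable (fun t => ∑ p, P i p * M t p q) μ :=
    integrable_finsetSum _ fun p _ => (hM p q).const_mul _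
  simp only [ofEigenbases, mul_apply, of_apply]
  rw [integral_finsetSum _ fun q _ => (hsum _ q).mul_const _]
  refine sum_congr rfl fun q _ => ?_
  rw [integral_mul_const, integral_finsetSum _ fun p _ => (hM p q).const_mul _]
  simp only [integral_const_mul]

theorem integral_Ioi_ofEigenbases_apply_eq (hA : A.IsHermitian) (hB : B.IsHermitian)
    {M N : ℝ → Matrix m n 𝕜} (hM : ∀ p q, IntegrableOn (fun τ => M τ p q) (Set.Ioi 0))
    (hN : ∀ p q, IntervalIntegrable (fun s => N s p q) volume 0 1)
    (hMN : ∀ p q, ∫ τ in Set.Ioi (0 : ℝ), M τ p q = ∫ s in (0 : ℝ)..1, N s p q) (i : m) (j : n) :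
    ∫ τ in Set.Ioi (0 : ℝ), ofEigenbases hA hB (M τ) i j =
      ∫ s in (0 : ℝ)..1, ofEigenbases hA hB (N s) i j := by
  rw [intervalIntegral.integral_of_le zero_le_one, integral_ofEigenbases_apply hA hB hM,
    integral_ofEigenbases_apply hA hB fun p q => (hN p q).1]
  simp only [hMN, intervalIntegral.integral_of_le zero_le_one]

theorem eq_ofEigenbases_diagonal (hA : A.IsHermitian) :
    A = ofEigenbases hA hA (diagonal fun p => (hA.eigenvalues p : 𝕜)) :=
  hA.spectral_theorem

theorem inv_add_smul_one_eq (hA : A.PosDef) {τ : ℝ} (hτ : 0 < τ) :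
    (A + (τ : 𝕜) • 1)⁻¹ =
      ofEigenbases hA.1 hA.1 (diagonal fun p => (((hA.1.eigenvalues p + τ)⁻¹ : ℝ) : 𝕜)) := by
  have hshift : A + (τ : 𝕜) • 1 =
      ofEigenbases hA.1 hA.1 (diagonal fun p => ((hA.1.eigenvalues p + τ : ℝ) : 𝕜)) := by
    conv_lhs => rw [eq_ofEigenbases_diagonal hA.1, ← ofEigenbases_one hA.1]
    rw [← ofEigenbases_smul, ← ofEigenbases_add, smul_one_eq_diagonal, diagonal_add]
    simp only [RCLike.ofReal_add]
  refine inv_eq_right_inv ?_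
  rw [hshift, ofEigenbases_mul_ofEigenbases, diagonal_mul_diagonal, ← ofEigenbases_one hA.1,
    ← diagonal_one]
  congr! with p
  have := (add_pos (hA.eigenvalues_pos p) hτ).ne'
  rw [← RCLike.ofReal_mul, mul_inv_cancel₀ this, RCLike.ofReal_one]

theorem resolvent_mul_mul_resolvent (hA : A.PosDef) (hB : B.PosDef) (C : Matrix m n 𝕜) {τ : ℝ}
    (hτ : 0 < τ) :
    (A + (τ : 𝕜) • 1)⁻¹ * C * (B + (τ : 𝕜) • 1)⁻¹ = ofEigenbases hA.1 hB.1 (of fun p q =>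
      ((hA.1.eigenvalues p + τ) * (hB.1.eigenvalues q + τ))⁻¹ • toEigenbases hA.1 hB.1 C p q) := by
  rw [inv_add_smul_one_eq hA hτ, inv_add_smul_one_eq hB hτ]
  conv_lhs => rw [← ofEigenbases_toEigenbases hA.1 hB.1 C]
  rw [ofEigenbases_mul_ofEigenbases, ofEigenbases_mul_ofEigenbases]
  congr! 1
  ext p q
  rw [mul_diagonal, diagonal_mul, of_apply, mul_inv, RCLike.real_smul_eq_coe_mul,
    RCLike.ofReal_mul]
  ring

theorem resolvent_mul_mul_resolvent_mul_mul_resolvent (hA : A.PosDef) (hB : B.PosDef)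
    (C : Matrix m n 𝕜) {τ : ℝ} (hτ : 0 < τ) :
    (A + (τ : 𝕜) • 1)⁻¹ * C * (B + (τ : 𝕜) • 1)⁻¹ * Cᴴ * (A + (τ : 𝕜) • 1)⁻¹ =
      ofEigenbases hA.1 hA.1 (of fun p p' => ∑ q,
        ((hA.1.eigenvalues p + τ) * (hB.1.eigenvalues q + τ) * (hA.1.eigenvalues p' + τ))⁻¹ •
          (toEigenbases hA.1 hB.1 C p q * star (toEigenbases hA.1 hB.1 C p' q))) := by
  rw [resolvent_mul_mul_resolvent hA hB C hτ, inv_add_smul_one_eq hA hτ,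
    ← ofEigenbases_toEigenbases hB.1 hA.1 Cᴴ, ← conjTranspose_toEigenbases,
    ofEigenbases_mul_ofEigenbases, ofEigenbases_mul_ofEigenbases]
  congr! 1
  ext p p'
  rw [mul_diagonal, mul_apply, of_apply, sum_mul]
  refine sum_congr rfl fun q _ => ?_
  simp only [of_apply, conjTranspose_apply, mul_inv, RCLike.real_smul_eq_coe_mul,
    RCLike.ofReal_mul]
  ring

end EigenbasisCoordinates

section SylvesterSolution

variable {𝕜 m n : Type*} [RCLike 𝕜] [Fintype m] [DecidableEq m] [Fintype n] [DecidableEq n]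
  {A : Matrix m m 𝕜} {B : Matrix n n 𝕜}

/-- The solution `X` of the Sylvester equation `(1 - s) • (A * X) + s • (X * B) = C`, for positive
definite `A` and `B` and `s ∈ [0, 1]`. -/
noncomputable def sylvesterSolution (hA : A.IsHermitian) (hB : B.IsHermitian)
    (C : Matrix m n 𝕜) (s : ℝ) : Matrix m n 𝕜 :=
  ofEigenbases hA hB (of fun p q =>
    ((1 - s) * hA.eigenvalues p + s * hB.eigenvalues q)⁻¹ • toEigenbases hA hB C p q)

theorem conjTranspose_sylvesterSolution (hA : A.IsHermitian) (hB : B.IsHermitian)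
    (C : Matrix m n 𝕜) (s : ℝ) :
    (sylvesterSolution hA hB C s)ᴴ = sylvesterSolution hB hA Cᴴ (1 - s) := by
  rw [sylvesterSolution, conjTranspose_ofEigenbases, sylvesterSolution]
  congr! 1
  ext q p
  simp only [← conjTranspose_toEigenbases hA hB, conjTranspose_apply, of_apply, star_smul,
    star_trivial]
  ring_nf

theorem continuousOn_sylvesterSolution (hA : A.PosDef) (hB : B.PosDef) (C : Matrix m n 𝕜) :
    ContinuousOn (sylvesterSolution hA.1 hB.1 C) (Set.Icc 0 1) :=
  (continuous_ofEigenbases hA.1 hB.1).comp_continuousOn <|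
    continuousOn_pi.2 fun p => continuousOn_pi.2 fun q =>
      (continuousOn_inv_segment (hA.eigenvalues_pos p) (hB.eigenvalues_pos q)).smul
        continuousOn_const

theorem continuousOn_sylvesterSolution_apply (hA : A.PosDef) (hB : B.PosDef) (C : Matrix m n 𝕜)
    (i : m) (j : n) : ContinuousOn (fun s => sylvesterSolution hA.1 hB.1 C s i j) (Set.Icc 0 1) :=
  continuousOn_pi.1 (continuousOn_pi.1 (continuousOn_sylvesterSolution hA hB C) i) j

theorem smul_sylvesterSolution_mul_conjTranspose (hA : A.IsHermitian) (hB : B.IsHermitian)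
    (C : Matrix m n 𝕜) (s : ℝ) :
    ((1 - s : ℝ) : 𝕜) • (sylvesterSolution hA hB C s * (sylvesterSolution hA hB C s)ᴴ) =
      ofEigenbases hA hA (of fun p p' => ∑ q,
        ((1 - s) * (((1 - s) * hA.eigenvalues p + s * hB.eigenvalues q)⁻¹ *
          ((1 - s) * hA.eigenvalues p' + s * hB.eigenvalues q)⁻¹)) •
            (toEigenbases hA hB C p q * star (toEigenbases hA hB C p' q))) := by
  rw [sylvesterSolution, conjTranspose_ofEigenbases, ofEigenbases_mul_ofEigenbases,
    ← ofEigenbases_smul]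
  congr! 1
  ext p p'
  simp only [Matrix.smul_apply, mul_apply, conjTranspose_apply, of_apply, star_smul, star_trivial,
    smul_mul_smul_comm, smul_sum, ← RCLike.real_smul_eq_coe_smul, smul_smul]

theorem integral_resolvent_mul_mul_resolvent_apply (hA : A.PosDef) (hB : B.PosDef)
    (C : Matrix m n 𝕜) (i : m) (j : n) :
    ∫ τ in Set.Ioi (0 : ℝ), ((A + (τ : 𝕜) • 1)⁻¹ * C * (B + (τ : 𝕜) • 1)⁻¹) i j =
      ∫ s in (0 : ℝ)..1, sylvesterSolution hA.1 hB.1 C s i j := by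
  have ha := hA.eigenvalues_pos
  have hb := hB.eigenvalues_pos
  rw [setIntegral_congr_fun measurableSet_Ioi fun τ hτ =>
    congrFun₂ (resolvent_mul_mul_resolvent hA hB C hτ) i j]
  refine integral_Ioi_ofEigenbases_apply_eq hA.1 hB.1 (fun p q => ?_) (fun p q => ?_)
    (fun p q => ?_) i j
  · exact (integrableOn_and_integral_Ioi_inv_mul (ha p) (hb q)).1.smul_const _
  · exact (continuousOn_inv_segment (ha p) (hb q)).smul continuousOn_const
      |>.intervalIntegrable_of_Icc zero_le_one
  · simp only [of_apply, integral_smul_const, intervalIntegral.integral_smul_const,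
      (integrableOn_and_integral_Ioi_inv_mul (ha p) (hb q)).2]

theorem integral_resolvent_mul_mul_resolvent_mul_mul_resolvent_apply (hA : A.PosDef)
    (hB : B.PosDef) (C : Matrix m n 𝕜) (i i' : m) :
    ∫ τ in Set.Ioi (0 : ℝ),
        ((A + (τ : 𝕜) • 1)⁻¹ * C * (B + (τ : 𝕜) • 1)⁻¹ * Cᴴ * (A + (τ : 𝕜) • 1)⁻¹) i i' =
      ∫ s in (0 : ℝ)..1, (((1 - s : ℝ) : 𝕜) •
        (sylvesterSolution hA.1 hB.1 C s * (sylvesterSolution hA.1 hB.1 C s)ᴴ)) i i' := by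
  have ha := hA.eigenvalues_pos
  have hb := hB.eigenvalues_pos
  have hfeyn p q p' := integrableOn_and_integral_Ioi_inv_mul_mul (ha p) (hb q) (ha p')
  have hint p q p' : IntervalIntegrable (fun s : ℝ =>
      ((1 - s) * (((1 - s) * hA.1.eigenvalues p + s * hB.1.eigenvalues q)⁻¹ *
        ((1 - s) * hA.1.eigenvalues p' + s * hB.1.eigenvalues q)⁻¹)) •
          (toEigenbases hA.1 hB.1 C p q * star (toEigenbases hA.1 hB.1 C p' q))) volume 0 1 :=
    ((continuousOn_one_sub_mul_inv_segment_mul (ha p) (hb q) (ha p')).smul continuousOn_const)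
      |>.intervalIntegrable_of_Icc zero_le_one
  rw [setIntegral_congr_fun measurableSet_Ioi fun τ hτ =>
    congrFun₂ (resolvent_mul_mul_resolvent_mul_mul_resolvent hA hB C hτ) i i']
  simp only [smul_sylvesterSolution_mul_conjTranspose]
  refine integral_Ioi_ofEigenbases_apply_eq hA.1 hA.1 (fun p p' => ?_) (fun p p' => ?_)
    (fun p p' => ?_) i i'
  · exact integrable_finsetSum _ fun q _ => (hfeyn p q p').1.smul_const _
  · simpa only [Finset.sum_fn, of_apply] using IntervalIntegrable.sum univ fun q _ => hint p q p'
  · simp only [of_apply]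
    rw [integral_finsetSum _ fun q _ => (hfeyn p q p').1.smul_const _,
      intervalIntegral.integral_finsetSum fun q _ => hint p q p']
    simp only [integral_smul_const, intervalIntegral.integral_smul_const, (hfeyn p _ p').2]

theorem re_integral_resolvent_left (hA : A.PosDef) (hB : B.PosDef) (C : Matrix m n 𝕜) (i : m) :
    RCLike.re (∫ τ in Set.Ioi (0 : ℝ),
        ((A + (τ : 𝕜) • 1)⁻¹ * C * (B + (τ : 𝕜) • 1)⁻¹ * Cᴴ * (A + (τ : 𝕜) • 1)⁻¹) i i) =
      ∑ j, ∫ s in (0 : ℝ)..1, ‖sylvesterSolution hA.1 hB.1 C s i j‖ ^ 2 * (1 - s) := by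
  have hcont (j : n) : ContinuousOn
      (fun s => ‖sylvesterSolution hA.1 hB.1 C s i j‖ ^ 2 * (1 - s)) (Set.Icc 0 1) :=
    ((continuousOn_sylvesterSolution_apply hA hB C i j).norm.pow 2).mul (by fun_prop)
  rw [integral_resolvent_mul_mul_resolvent_mul_mul_resolvent_apply hA hB,
    ← intervalIntegral.integral_finsetSum fun j _ =>
      (hcont j).intervalIntegrable_of_Icc zero_le_one]
  simp only [Matrix.smul_apply, mul_conjTranspose_apply_self, smul_eq_mul, ← RCLike.ofReal_mul,
    RCLike.intervalIntegral_ofReal, RCLike.ofReal_re]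
  exact intervalIntegral.integral_congr fun s _ => by rw [mul_comm, sum_mul]

theorem re_integral_resolvent_right (hA : A.PosDef) (hB : B.PosDef) (C : Matrix m n 𝕜) (j : n) :
    RCLike.re (∫ τ in Set.Ioi (0 : ℝ),
        ((B + (τ : 𝕜) • 1)⁻¹ * Cᴴ * (A + (τ : 𝕜) • 1)⁻¹ * C * (B + (τ : 𝕜) • 1)⁻¹) j j) =
      ∑ i, ∫ s in (0 : ℝ)..1, ‖sylvesterSolution hA.1 hB.1 C s i j‖ ^ 2 * s := by
  have hleft := re_integral_resolvent_left hB hA Cᴴ j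
  rw [conjTranspose_conjTranspose] at hleft
  rw [hleft]
  refine sum_congr rfl fun i _ => ?_
  have hswap (s : ℝ) : ‖sylvesterSolution hB.1 hA.1 Cᴴ (1 - s) j i‖ =
      ‖sylvesterSolution hA.1 hB.1 C s i j‖ := by
    rw [← conjTranspose_sylvesterSolution, conjTranspose_apply, norm_star]
  have hreflect := intervalIntegral.integral_comp_sub_left (a := 0) (b := 1)
    (fun s => ‖sylvesterSolution hB.1 hA.1 Cᴴ s j i‖ ^ 2 * (1 - s)) 1
  simpa only [hswap, sub_sub_cancel, sub_self, sub_zero] using hreflect.symm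

theorem sum_logMean_mul_sq_norm_le (hA : A.PosDef) (hB : B.PosDef) (C : Matrix m n 𝕜)
    {x : m → ℝ} {y : n → ℝ} (hx : ∀ i, 0 ≤ x i) (hy : ∀ j, 0 ≤ y j) :
    ∑ i, ∑ j, logMean (x i) (y j) * ‖∫ τ in Set.Ioi (0 : ℝ),
        ((A + (τ : 𝕜) • 1)⁻¹ * C * (B + (τ : 𝕜) • 1)⁻¹) i j‖ ^ 2 ≤
      ∑ i, RCLike.re (∫ τ in Set.Ioi (0 : ℝ),
        ((A + (τ : 𝕜) • 1)⁻¹ * C * (B + (τ : 𝕜) • 1)⁻¹ * Cᴴ * (A + (τ : 𝕜) • 1)⁻¹) i i) * x i +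
      ∑ j, RCLike.re (∫ τ in Set.Ioi (0 : ℝ),
        ((B + (τ : 𝕜) • 1)⁻¹ * Cᴴ * (A + (τ : 𝕜) • 1)⁻¹ * C * (B + (τ : 𝕜) • 1)⁻¹) j j) * y j := by
  set V := sylvesterSolution hA.1 hB.1 C
  have hV (i : m) (j : n) : ContinuousOn (fun s => V s i j) (Set.Icc 0 1) :=
    continuousOn_sylvesterSolution_apply hA hB C i j
  have hint (i : m) (j : n) {g : ℝ → ℝ} (hg : Continuous g) :
      IntervalIntegrable (fun s => ‖V s i j‖ ^ 2 * g s) volume 0 1 :=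
    (((hV i j).norm.pow 2).mul hg.continuousOn).intervalIntegrable_of_Icc zero_le_one
  have hsplit (i : m) (j : n) : ∫ s in (0 : ℝ)..1, ‖V s i j‖ ^ 2 * ((1 - s) * x i + s * y j) =
      (∫ s in (0 : ℝ)..1, ‖V s i j‖ ^ 2 * (1 - s)) * x i +
        (∫ s in (0 : ℝ)..1, ‖V s i j‖ ^ 2 * s) * y j := by
    simp only [mul_add, ← mul_assoc]
    rw [intervalIntegral.integral_add ((hint i j (by fun_prop)).mul_const _)
      ((hint i j (by fun_prop)).mul_const _), intervalIntegral.integral_mul_const,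
      intervalIntegral.integral_mul_const]
  calc _ = ∑ i, ∑ j, logMean (x i) (y j) * ‖∫ s in (0 : ℝ)..1, V s i j‖ ^ 2 := by
        simp only [integral_resolvent_mul_mul_resolvent_apply hA hB, V]
    _ ≤ ∑ i, ∑ j, ∫ s in (0 : ℝ)..1, ‖V s i j‖ ^ 2 * ((1 - s) * x i + s * y j) :=
        sum_le_sum fun i _ => sum_le_sum fun j _ =>
          logMean_mul_sq_norm_integral_le (hV i j) (hx i) (hy j)
    _ = _ := by
        simp only [hsplit, re_integral_resolvent_left hA hB, re_integral_resolvent_right hA hB,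
          sum_add_distrib, sum_mul]
        rw [sum_comm (f := fun i j => (∫ s in (0 : ℝ)..1, ‖V s i j‖ ^ 2 * s) * y j)]

end SylvesterSolution

section LiebInequality

variable {𝕜 m : Type*} [RCLike 𝕜] [Fintype m] [DecidableEq m] {A C : Matrix m m 𝕜}

theorem star_integral_resolvent_mul_mul_resolvent_apply (hA : A.IsHermitian) (hC : C.IsHermitian)
    (i j : m) :
    star (∫ τ in Set.Ioi (0 : ℝ), ((A + (τ : 𝕜) • 1)⁻¹ * C * (A + (τ : 𝕜) • 1)⁻¹) i j) =
      ∫ τ in Set.Ioi (0 : ℝ), ((A + (τ : 𝕜) • 1)⁻¹ * C * (A + (τ : 𝕜) • 1)⁻¹) j i := by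
  have hres (τ : ℝ) : (A + (τ : 𝕜) • 1)⁻¹.IsHermitian :=
    (hA.add (isHermitian_one.smul (RCLike.conj_ofReal τ))).inv
  rw [RCLike.star_def, ← integral_conj]
  refine integral_congr_ae (.of_forall fun τ => ?_)
  have hτ : ((A + (τ : 𝕜) • 1)⁻¹ * C * (A + (τ : 𝕜) • 1)⁻¹).IsHermitian := by
    simp only [IsHermitian, conjTranspose_mul, (hres τ).eq, hC.eq, Matrix.mul_assoc]
  exact hτ.apply j i

theorem lieb_entrywise_inequality_general (hA : A.PosDef) (hC : C.IsHermitian) (T R : Matrix m m 𝕜)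
    (hT : T = Matrix.of fun i j =>
      ∫ τ in Set.Ioi (0 : ℝ), ((A + (τ : 𝕜) • 1)⁻¹ * C * (A + (τ : 𝕜) • 1)⁻¹) i j)
    (hR : R = Matrix.of fun i j => 2 * ∫ τ in Set.Ioi (0 : ℝ),
      ((A + (τ : 𝕜) • 1)⁻¹ * C * (A + (τ : 𝕜) • 1)⁻¹ * C * (A + (τ : 𝕜) • 1)⁻¹) i j)
    (b : m → ℝ) (hb : ∀ i, 0 ≤ b i) :
    ∫ s in (0 : ℝ)..1, ∑ i, ∑ j, RCLike.re (T i j * T j i) * (b j ^ s) * (b i ^ (1 - s)) ≤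
      ∑ i, RCLike.re (R i i) * b i := by
  have hTT (i j : m) : RCLike.re (T i j * T j i) = ‖T i j‖ ^ 2 := by
    have hstar : T j i = star (T i j) := by
      simp only [hT, of_apply, star_integral_resolvent_mul_mul_resolvent_apply hA.1 hC]
    rw [hstar, RCLike.star_def, RCLike.mul_conj]
    norm_cast
  have hmain := sum_logMean_mul_sq_norm_le hA hA C hb hb
  rw [hC.eq, ← sum_add_distrib] at hmain
  rw [integral_sum_sum_mul_rpow_mul_rpow (fun i j => RCLike.re (T i j * T j i))]
  simp only [hTT]
  refine le_of_eq_of_le ?_ (hmain.trans_eq (sum_congr rfl fun i _ => ?_))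
  · simp only [hT, of_apply]
  · rw [hR, of_apply, two_mul, map_add, add_mul]

end LiebInequality

/-- Entrywise form of Lieb's lemma: with `T, R` as above, for all nonnegative reals
`b₁, …, bₙ`, `Σᵢ Rᵢᵢ bᵢ ≥ ∫₀¹ Σᵢⱼ Tᵢⱼ bⱼ^s Tⱼᵢ bᵢ^(1-s) ds`. -/
theorem lieb_entrywise_inequality {n : ℕ}
    (A C : Matrix (Fin n) (Fin n) ℂ) (hA : A.PosDef) (hC : C.IsHermitian)
    (T R : Matrix (Fin n) (Fin n) ℂ)
    (hT : T = Matrix.of fun a b =>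
      ∫ τ in Set.Ioi (0 : ℝ),
        ((A + (τ : ℂ) • 1)⁻¹ * C * (A + (τ : ℂ) • 1)⁻¹) a b)
    (hR : R = Matrix.of fun a b =>
      2 * ∫ τ in Set.Ioi (0 : ℝ),
        ((A + (τ : ℂ) • 1)⁻¹ * C * (A + (τ : ℂ) • 1)⁻¹ * C * (A + (τ : ℂ) • 1)⁻¹) a b)
    (b : Fin n → ℝ) (hb : ∀ i, 0 ≤ b i) :
    ∫ s in (0 : ℝ)..1,
        ∑ i, ∑ j, (T i j * T j i).re * (b j ^ s) * (b i ^ (1 - s))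
      ≤ ∑ i, (R i i).re * b i := by
  exact lieb_entrywise_inequality_general hA hC T R hT hR b hb
end
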